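/- With high probability, sat(G(n,1/2), C_4) ≤ (27/14)·n·(1+o(1)). -/

import Mathlib

open MeasureTheory Filter Real

/-- The index type of potential edges of a graph on `Fin n`. -/
abbrev EdgeType (n : ℕ) := {e : Sym2 (Fin n) // ¬ e.IsDiag}

/-- The product Bernoulli measure on edge-indicator functions: the binomial
random graph `G(n,p)`. -/
noncomputable def erMeasure (n : ℕ) (p : ℝ) : Measure (EdgeType n → Bool) :=
  Measure.pi fun _ => (PMF.bernoulli (min (Real.toNNReal p) 1) (min_le_right _ _)).toMeasure

/-- The simple graph determined by an edge-indicator function. -/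
def graphOf {n : ℕ} (ω : EdgeType n → Bool) : SimpleGraph (Fin n) :=
  SimpleGraph.fromEdgeSet {e | ∃ h : ¬ e.IsDiag, ω ⟨e, h⟩ = true}

/-- `H` contains a (not necessarily induced) copy of `F`. -/
def ContainsCopy {α β : Type*} (F : SimpleGraph α) (H : SimpleGraph β) : Prop :=
  ∃ f : α → β, Function.Injective f ∧ ∀ ⦃a b⦄, F.Adj a b → H.Adj (f a) (f b)

/-- `H` is `F`-saturated in `G`: `H` is a spanning subgraph of `G` that is `F`-free,
and adding any edge of `G` missing from `H` creates a copy of `F`. -/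
def IsSaturatedIn {V : Type*} {α : Type*} (G H : SimpleGraph V) (F : SimpleGraph α) : Prop :=
  H ≤ G ∧ ¬ ContainsCopy F H ∧
    ∀ v w : V, G.Adj v w → ¬ H.Adj v w →
      ContainsCopy F (H ⊔ SimpleGraph.fromEdgeSet {s(v, w)})

/-- The saturation number `sat(G,F)`: the minimum number of edges of an
`F`-saturated spanning subgraph of `G`. -/
noncomputable def satNum {V α : Type*} (G : SimpleGraph V) (F : SimpleGraph α) : ℕ :=
  sInf {k | ∃ H : SimpleGraph V, IsSaturatedIn G H F ∧ H.edgeSet.ncard = k}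

/-- The cycle `C_m`, as a graph on `ZMod m`. -/
def cycGraph (m : ℕ) : SimpleGraph (ZMod m) :=
  SimpleGraph.fromRel (fun a b => a = b + 1)


def NoC4 {V : Type*} (H : SimpleGraph V) : Prop :=
  ∀ w x y z : V, w ≠ y → x ≠ z → H.Adj w x → H.Adj x y → H.Adj y z → H.Adj z w → False

lemma noC4_iff {V : Type*} (H : SimpleGraph V) : NoC4 H ↔ ¬ ContainsCopy (cycGraph 4) H := by
  constructor
  · rintro h ⟨f, hf, hadj⟩
    have key : ∀ a : ZMod 4, H.Adj (f a) (f (a + 1)) := by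
      intro a
      apply hadj
      have : ∀ a : ZMod 4, a ≠ a + 1 := by decide
      simp [cycGraph, SimpleGraph.fromRel_adj, this a]
    have e : ∀ a b : ZMod 4, a ≠ b → f a ≠ f b := fun a b hab hh => hab (hf hh)
    refine h (f 0) (f 1) (f 2) (f 3) (e _ _ (by decide)) (e _ _ (by decide)) ?_ ?_ ?_ ?_
    · simpa using key 0
    · have := key 1
      rwa [show (1 : ZMod 4) + 1 = 2 by decide] at this
    · have := key 2
      rwa [show (2 : ZMod 4) + 1 = 3 by decide] at this
    · have := key 3
      rwa [show (3 : ZMod 4) + 1 = 0 by decide] at this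
  · intro h w x y z hwy hxz h1 h2 h3 h4
    apply h
    let f : ZMod 4 → V := fun i => (![w, x, y, z] : Fin 4 → V) i
    have hs : ∀ a : ZMod 4, H.Adj (f a) (f (a + 1)) := by
      intro a
      change Fin 4 at a
      fin_cases a
      · exact h1
      · exact h2
      · exact h3
      · exact h4
    refine ⟨f, ?_, ?_⟩
    · intro a b hab
      change Fin 4 at a b
      have n1 := h1.ne
      have n2 := h2.ne
      have n3 := h3.ne
      have n4 := h4.ne
      fin_cases a <;> fin_cases b <;> first | rfl | (exfalso; simp [f] at hab; simp_all)
    · intro a b hab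
      rw [cycGraph, SimpleGraph.fromRel_adj] at hab
      rcases hab.2 with h | h
      · subst h; exact (hs b).symm
      · subst h; exact hs a

lemma exists_saturated {V : Type*} [Finite V] (G H0 : SimpleGraph V) (h0 : H0 ≤ G)
    (hc : NoC4 H0) : ∃ H, H0 ≤ H ∧ NoC4 H ∧ IsSaturatedIn G H (cycGraph 4) := by
  obtain ⟨H, hH0, hmax⟩ := (Set.toFinite {H : SimpleGraph V | H ≤ G ∧ NoC4 H}).exists_le_maximal
    (show H0 ∈ _ from ⟨h0, hc⟩)
  refine ⟨H, hH0, hmax.1.2, hmax.1.1, (noC4_iff H).1 hmax.1.2, ?_⟩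
  intro v w hvw hn
  by_contra hcon
  have hle : H ⊔ SimpleGraph.fromEdgeSet {s(v, w)} ≤ H := by
    apply hmax.2 _ le_sup_left
    refine ⟨sup_le hmax.1.1 ?_, (noC4_iff _).2 hcon⟩
    intro a b hab
    rw [SimpleGraph.fromEdgeSet_adj] at hab
    have h := hab.1
    rw [Set.mem_singleton_iff, Sym2.eq_iff] at h
    rcases h with ⟨rfl, rfl⟩ | ⟨rfl, rfl⟩
    · exact hvw
    · exact hvw.symm
  apply hn
  apply hle
  right
  rw [SimpleGraph.fromEdgeSet_adj]
  exact ⟨rfl, hvw.ne⟩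

/-- The starting graph: stars, and one extra edge. -/
def startGraph {V : Type*} (m : ℕ) (a : ℕ → V) (cl : V → ℕ) : SimpleGraph V :=
  SimpleGraph.fromRel (fun v w => (cl v < m ∧ w = a (cl v)) ∨ (v = a 1 ∧ w = a 2))

lemma startGraph_noC4 {V : Type*} (m : ℕ) (hm : 3 ≤ m) (a : ℕ → V) (cl : V → ℕ)
    (h0 : cl (a 0) = m) (h1 : ∀ k, 1 ≤ k → cl (a k) = 0) : NoC4 (startGraph m a cl) := by
  have adj : ∀ v w, (startGraph m a cl).Adj v w → v ≠ w ∧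
      ((cl v < m ∧ w = a (cl v)) ∨ (v = a 1 ∧ w = a 2) ∨
       (cl w < m ∧ v = a (cl w)) ∨ (w = a 1 ∧ v = a 2)) := by
    intro v w h
    rw [startGraph, SimpleGraph.fromRel_adj] at h
    tauto
  have hp : ∀ k, cl (a k) = 0 ∨ a k = a 0 := by
    intro k
    rcases Nat.eq_zero_or_pos k with rfl | h
    · right; rfl
    · left; exact h1 k h
  have two : ∀ x v y, x ≠ y → (startGraph m a cl).Adj x v → (startGraph m a cl).Adj v y →
      v = a 0 ∨ cl v = 0 := by
    intro x v y hxy hx hy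
    by_contra hcon
    push Not at hcon
    have e1 := h1 1 le_rfl
    have e2 := h1 2 (by norm_num)
    have hpar : ∀ k, v ≠ a k := by
      rintro k rfl
      rcases hp k with h | h
      · exact hcon.2 h
      · exact hcon.1 h
    have hx' := (adj _ _ hx).2
    have hy' := (adj _ _ hy).2
    simp only [hpar, false_and, and_false, false_or, or_false] at hx' hy'
    exact hxy (hx'.2.trans hy'.2.symm)
  have ins : ∀ v w, cl v = 0 → cl w = 0 → (startGraph m a cl).Adj v w →
      (v = a 1 ∧ w = a 2) ∨ (w = a 1 ∧ v = a 2) := by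
    intro v w hv hw h
    rcases (adj _ _ h).2 with h | h | h | h
    · rw [hv] at h; rw [h.2] at hw; omega
    · exact Or.inl h
    · rw [hw] at h; rw [h.2] at hv; omega
    · exact Or.inr h
  have path : ∀ x y z, x ≠ z → cl x = 0 → cl y = 0 → cl z = 0 →
      (startGraph m a cl).Adj x y → (startGraph m a cl).Adj y z → False := by
    intro x y z hxz hx hy hz h h'
    have n1 := h.ne
    rcases ins _ _ hx hy h with ⟨e1, e2⟩ | ⟨e1, e2⟩ <;>
    rcases ins _ _ hy hz h' with ⟨e3, e4⟩ | ⟨e3, e4⟩ <;> subst_vars <;> simp_all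
  intro w x y z hwy hxz hwx hxy hyz hzw
  have cw := two _ _ _ hxz.symm hzw hwx
  have cx := two _ _ _ hwy hwx hxy
  have cy := two _ _ _ hxz hxy hyz
  have cz := two _ _ _ hwy.symm hyz hzw
  have nwx := hwx.ne
  have nxy := hxy.ne
  have nyz := hyz.ne
  have nzw := hzw.ne
  by_cases ew : w = a 0
  · have cx' : cl x = 0 := cx.resolve_left (by rintro rfl; exact nwx ew)
    have cy' : cl y = 0 := cy.resolve_left (by rintro rfl; exact hwy ew)
    have cz' : cl z = 0 := cz.resolve_left (by rintro rfl; exact nzw ew.symm)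
    exact path x y z hxz cx' cy' cz' hxy hyz
  have cw' := cw.resolve_left ew
  by_cases ey : y = a 0
  · have cx' : cl x = 0 := cx.resolve_left (by rintro rfl; exact nxy ey.symm)
    have cz' : cl z = 0 := cz.resolve_left (by rintro rfl; exact nyz ey)
    exact path z w x hxz.symm cz' cw' cx' hzw hwx
  have cy' := cy.resolve_left ey
  by_cases ex : x = a 0
  · have cz' : cl z = 0 := cz.resolve_left (by rintro rfl; exact hxz ex)
    exact path y z w hwy.symm cy' cz' cw' hyz hzw
  · exact path w x y hwy cw' (cx.resolve_left ex) cy' hwx hxy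

open Classical in
lemma edge_count {V : Type*} [Fintype V] (H : SimpleGraph V) (hc : NoC4 H) (m : ℕ)
    (hm : 3 ≤ m) (a : ℕ → V) (cl : V → ℕ) (hcl : ∀ v, cl v ≤ m)
    (h0 : cl (a 0) = m) (h1 : ∀ k, 1 ≤ k → cl (a k) = 0) (h12 : a 1 ≠ a 2)
    (hle : startGraph m a cl ≤ H) (N : ℕ → ℕ)
    (hN : ∀ i, N i = (Finset.univ.filter (fun v => i ≤ cl v)).card) :
    2 * H.edgeSet.ncard ≤
      2 * (Fintype.card V + N 3 + ∑ i ∈ Finset.Icc 3 m, N i) + Fintype.card V + (N m) ^ 2 := by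
  have hne : ∀ v, cl v < m → v ≠ a (cl v) := by
    intro v hv he
    rcases Nat.eq_zero_or_pos (cl v) with h | h
    · rw [h] at he; rw [he] at hv; omega
    · have := h1 _ h; rw [← he] at this; omega
  have star : ∀ v, cl v < m → H.Adj v (a (cl v)) := by
    intro v hv
    apply hle
    rw [startGraph, SimpleGraph.fromRel_adj]
    exact ⟨hne v hv, Or.inl (Or.inl ⟨hv, rfl⟩)⟩
  have edge12 : H.Adj (a 1) (a 2) := by
    apply hle
    rw [startGraph, SimpleGraph.fromRel_adj]
    exact ⟨h12, Or.inl (Or.inr ⟨rfl, rfl⟩)⟩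
  have uniq : ∀ j, j < m → ∀ v y z, v ≠ a j → cl y = j → cl z = j → H.Adj v y → H.Adj v z →
      y = z := by
    intro j hj v y z hv hy hz h h'
    by_contra hyz
    have s1 := star y (by omega)
    have s2 := star z (by omega)
    rw [hy] at s1
    rw [hz] at s2
    exact hc v y (a j) z hv hyz h s1 s2.symm h'.symm
  have no12 : ∀ v y, cl v = 2 → cl y = 1 → ¬ H.Adj v y := by
    intro v y hv hy h
    have s1 := star v (by omega)
    have s2 := star y (by omega)
    rw [hv] at s1
    rw [hy] at s2
    refine hc v (a 2) (a 1) y ?_ ?_ s1 edge12.symm s2.symm h.symm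
    · rintro rfl; have := h1 1 le_rfl; omega
    · rintro rfl; have := h1 2 (by norm_num); omega
  set D : Finset (V × V) := Finset.univ.filter (fun p => H.Adj p.1 p.2) with hD
  have hDc : D.card = 2 * H.edgeSet.ncard := by
    have e1 := H.sum_degrees_eq_twice_card_edges
    have e2 : H.edgeSet.ncard = H.edgeFinset.card := by
      rw [← SimpleGraph.coe_edgeFinset, Set.ncard_coe_finset]
    rw [e2, ← e1, hD, Finset.card_filter, Fintype.sum_prod_type]
    refine Finset.sum_congr rfl fun v _ => ?_
    rw [← SimpleGraph.card_neighborFinset_eq_degree, SimpleGraph.neighborFinset_eq_filter,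
      Finset.card_filter]
  set L := D.filter (fun p => cl p.2 < cl p.1) with hL
  set E := D.filter (fun p => cl p.2 = cl p.1) with hE
  set R := D.filter (fun p => cl p.1 < cl p.2) with hR
  have hsplit : D.card ≤ L.card + E.card + R.card := by
    have : D ⊆ L ∪ E ∪ R := by
      intro p hp
      simp only [hL, hE, hR, Finset.mem_union, Finset.mem_filter, hp, true_and]
      omega
    exact (Finset.card_le_card this).trans
      ((Finset.card_union_le _ _).trans (Nat.add_le_add_right (Finset.card_union_le _ _) _))
  have hRL : R.card ≤ L.card := by
    apply Finset.card_le_card_of_injOn Prod.swap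
    · intro p hp
      simp only [hL, hR, hD, Finset.coe_filter, Finset.mem_filter, Finset.mem_univ, true_and,
        Set.mem_ofPred_eq, Prod.fst_swap, Prod.snd_swap] at hp ⊢
      exact ⟨hp.1.symm, hp.2⟩
    · exact Prod.swap_injective.injOn
  have hEc : E.card ≤ Fintype.card V + (N m) ^ 2 := by
    have hsub : E ⊆ E.filter (fun p => cl p.1 < m) ∪ 
        (Finset.univ.filter (fun v => m ≤ cl v)) ×ˢ (Finset.univ.filter (fun v => m ≤ cl v)) := by
      intro p hp
      simp only [hE, Finset.mem_union, Finset.mem_filter, Finset.mem_product, Finset.mem_univ,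
        true_and] at hp ⊢
      by_cases h : cl p.1 < m
      · left; exact ⟨hp, h⟩
      · right; omega
    refine (Finset.card_le_card hsub).trans ((Finset.card_union_le _ _).trans ?_)
    rw [Finset.card_product, hN, sq]
    apply Nat.add_le_add_right
    rw [← Finset.card_univ]
    apply Finset.card_le_card_of_injOn Prod.fst (fun _ _ => Finset.mem_univ _)
    rintro ⟨v, y⟩ hp ⟨v', z⟩ hq hvv
    simp only [hE, hD, Finset.coe_filter, Finset.mem_filter, Finset.mem_univ, true_and,
      Set.mem_ofPred_eq] at hp hq hvv
    subst hvv
    have := uniq (cl v) hp.2 v y z (hne v hp.2) hp.1.2 hq.1.2 hp.1.1 hq.1.1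
    rw [this]
  have hLc : L.card ≤ Fintype.card V + N 3 + ∑ i ∈ Finset.Icc 3 m, N i := by
    have hmaps : ∀ p ∈ L, cl p.2 ∈ Finset.range m := by
      intro p hp
      have := (Finset.mem_filter.1 hp).2
      have := hcl p.1
      rw [Finset.mem_range]; omega
    rw [Finset.card_eq_sum_card_fiberwise hmaps]
    have f0 : (L.filter (fun p => cl p.2 = 0)).card ≤ Fintype.card V := by
      rw [← Finset.card_univ]
      apply Finset.card_le_card_of_injOn (fun p => if p.1 = a 0 then p.2 else p.1)
        (fun _ _ => Finset.mem_univ _)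
      rintro ⟨v, y⟩ hp ⟨v', z⟩ hq hvv
      simp only [hL, hD, Finset.coe_filter, Finset.mem_filter, Finset.mem_univ, true_and,
        Set.mem_ofPred_eq] at hp hq hvv
      by_cases e1 : v = a 0 <;> by_cases e2 : v' = a 0
      · simp only [e1, e2, if_true] at hvv ⊢; rw [hvv]
      · simp only [e1, e2, if_true, if_false] at hvv
        rw [hvv] at hp
        omega
      · simp only [e1, e2, if_true, if_false] at hvv
        rw [hvv] at hp
        omega
      · simp only [e1, e2, if_false] at hvv
        subst hvv
        have := uniq 0 (by omega) v y z e1 hp.2 hq.2 hp.1.1 hq.1.1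
        rw [this]
    have fj : ∀ j, 1 ≤ j → j < m → (L.filter (fun p => cl p.2 = j)).card ≤
        if j = 1 then N 3 else N (j + 1) := by
      intro j hj hjm
      have inj : Set.InjOn Prod.fst (L.filter (fun p => cl p.2 = j) : Set (V × V)) := by
        rintro ⟨v, y⟩ hp ⟨v', z⟩ hq hvv
        simp only [hL, hD, Finset.coe_filter, Finset.mem_filter, Finset.mem_univ, true_and,
          Set.mem_ofPred_eq] at hp hq hvv
        subst hvv
        have : v ≠ a j := by rintro rfl; have := h1 j hj; omega
        have := uniq j hjm v y z this hp.2 hq.2 hp.1.1 hq.1.1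
        rw [this]
      split_ifs with hj1
      · rw [hN]
        refine Finset.card_le_card_of_injOn Prod.fst ?_ inj
        rintro ⟨v, y⟩ hp
        simp only [hL, hD, Finset.coe_filter, Finset.mem_filter, Finset.mem_univ, true_and,
          Set.mem_ofPred_eq] at hp ⊢
        by_contra hlt
        exact no12 v y (by omega) (by omega) hp.1.1
      · rw [hN]
        refine Finset.card_le_card_of_injOn Prod.fst ?_ inj
        rintro ⟨v, y⟩ hp
        simp only [hL, hD, Finset.coe_filter, Finset.mem_filter, Finset.mem_univ, true_and,
          Set.mem_ofPred_eq] at hp ⊢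
        omega
    obtain ⟨k, rfl⟩ : ∃ k, m = k + 2 := ⟨m - 2, by omega⟩
    rw [Finset.sum_range_succ', Finset.sum_range_succ']
    have hs : ∑ i ∈ Finset.Icc 3 (k + 2), N i = ∑ i ∈ Finset.range k, N (i + 3) := by
      rw [show Finset.Icc 3 (k + 2) = Finset.Ico 3 (k + 3) from rfl, Finset.sum_Ico_eq_sum_range]
      refine Finset.sum_congr (by simp) fun i _ => by rw [add_comm]
    rw [hs]
    have hsum : ∑ i ∈ Finset.range k, (L.filter (fun p => cl p.2 = i + 1 + 1)).card ≤
        ∑ i ∈ Finset.range k, N (i + 3) := by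
      apply Finset.sum_le_sum
      intro i hi
      rw [Finset.mem_range] at hi
      have := fj (i + 1 + 1) (by omega) (by omega)
      rwa [if_neg (by omega)] at this
    have hf1 := fj 1 le_rfl (by omega)
    rw [if_pos rfl] at hf1
    simp only [zero_add] at *
    omega
  omega

open Classical in
/-- Weak one-sided discrepancy property. -/
def Disc {V : Type*} [Fintype V] (K : ℕ) (G : SimpleGraph V) : Prop :=
  ∀ X U : Finset V, Disjoint X U → K * Fintype.card V ≤ X.card * U.card →
    ∃ x ∈ X, 49 * U.card ≤ 100 * (U.filter (fun v => G.Adj x v)).card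

open Classical in
lemma exists_core {V : Type*} [Fintype V] (K : ℕ) (hK : 1 ≤ K) (G : SimpleGraph V)
    (hG : Disc K G) (hn : 1000 * K ≤ Fintype.card V) :
    ∃ (X0 : Finset V) (a : ℕ → V), X0.card = 2 * K ∧ a 0 ∈ X0 ∧
      (∀ k, 1 ≤ k → a k ∉ X0 ∧ G.Adj (a 0) (a k)) ∧ G.Adj (a 1) (a 2) ∧
      ∀ k, ((Finset.univ.filter (fun v => v ∉ X0 ∧ ∀ i < k, ¬ G.Adj (a i) v)).card : ℝ) ≤
        (51 / 100 : ℝ) ^ k * Fintype.card V + 17 * K := by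
  set n := Fintype.card V with hnd
  obtain ⟨X0, -, hX0⟩ := Finset.exists_subset_card_eq (s := (Finset.univ : Finset V))
    (n := 2 * K) (by rw [Finset.card_univ]; omega)
  set U0 : Finset V := Finset.univ \ X0 with hU0
  have hU0c : U0.card = n - 2 * K := by
    rw [hU0, Finset.card_sdiff_of_subset (Finset.subset_univ _), Finset.card_univ, hX0]
  obtain ⟨a0, ha0, hdeg0⟩ := hG X0 U0 Finset.disjoint_sdiff (by
    rw [hU0c, hX0, ← hnd]
    obtain ⟨t, ht⟩ := Nat.exists_eq_add_of_le hn
    rw [ht]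
    have : 1000 * K + t - 2 * K = 998 * K + t := by omega
    rw [this]
    nlinarith)
  set A := U0.filter (fun v => G.Adj a0 v) with hA
  set U1 := U0.filter (fun v => ¬ G.Adj a0 v) with hU1
  let good : V → Finset V → Prop := fun x S =>
    17 * K ≤ S.card → 49 * S.card ≤ 100 * (S.filter (fun v => G.Adj x v)).card
  have pick : ∀ X S : Finset V, Disjoint X S → n ≤ 17 * X.card → ∃ x ∈ X, good x S := by
    intro X S hd hX
    by_cases hS : 17 * K ≤ S.card
    · obtain ⟨x, hx, h⟩ := hG X S hd (by nlinarith)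
      exact ⟨x, hx, fun _ => h⟩
    · have : X.Nonempty := by rw [← Finset.card_pos]; omega
      obtain ⟨x, hx⟩ := this
      exact ⟨x, hx, fun h => absurd h hS⟩
  have hAU1 : Disjoint A U1 := Finset.disjoint_filter_filter_not _ _ _
  obtain ⟨B, hBA, hB⟩ := Finset.exists_subset_card_eq (s := A) (n := n / 5) (by omega)
  set C := A \ B with hC
  have hCc : C.card = A.card - n / 5 := by rw [hC, Finset.card_sdiff_of_subset hBA, hB]
  set B1 := B.filter (fun x => ¬ good x U1) with hB1
  have hB1c : 17 * B1.card < n := by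
    by_contra hcon
    obtain ⟨x, hx, hg⟩ := pick B1 U1
      (Finset.disjoint_of_subset_left ((Finset.filter_subset _ _).trans hBA) hAU1) (by omega)
    exact (Finset.mem_filter.1 hx).2 hg
  set B2 := B.filter (fun x => good x U1) with hB2
  have hB2c : B2.card + B1.card = B.card := Finset.card_filter_add_card_filter_not _
  obtain ⟨a1, ha1, hdeg1⟩ := hG B2 C
    (Finset.disjoint_of_subset_left (Finset.filter_subset _ _) Finset.disjoint_sdiff) (by
      have e1 : n ≤ 10 * B2.card := by omega
      have e2 : 100 * K ≤ C.card := by omega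
      rw [← hnd]
      nlinarith)
  set C2 := C.filter (fun v => G.Adj a1 v) with hC2
  have hCA : C ⊆ A := Finset.sdiff_subset
  set U2 := U1.filter (fun v => ¬ G.Adj a1 v) with hU2
  obtain ⟨a2, ha2, hg2⟩ := pick C2 U2
    (Finset.disjoint_of_subset_left ((Finset.filter_subset _ _).trans hCA)
      (Finset.disjoint_of_subset_right (Finset.filter_subset _ _) hAU1)) (by omega)
  have ha1A : a1 ∈ A := hBA (Finset.mem_filter.1 ha1).1
  have hg1 : good a1 U1 := (Finset.mem_filter.1 ha1).2
  have ha2A : a2 ∈ A := hCA (Finset.mem_filter.1 ha2).1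
  have ha12 : G.Adj a1 a2 := (Finset.mem_filter.1 ha2).2
  have nxt : ∀ S : Finset V, ∃ x ∈ A, Disjoint A S → good x S := by
    intro S
    by_cases hd : Disjoint A S
    · obtain ⟨x, hx, h⟩ := pick A S hd (by omega)
      exact ⟨x, hx, fun _ => h⟩
    · exact ⟨a1, ha1A, fun h => absurd h hd⟩
  choose nx hnxA hnxg using nxt
  let st : ℕ → Finset V → V := fun k S =>
    if k = 0 then a0 else if k = 1 then a1 else if k = 2 then a2 else nx S
  let U : ℕ → Finset V := fun k => Nat.rec U0 (fun k S => S.filter (fun v => ¬ G.Adj (st k S) v)) k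
  let a : ℕ → V := fun k => st k (U k)
  have hUs : ∀ k, U (k + 1) = (U k).filter (fun v => ¬ G.Adj (a k) v) := fun k => rfl
  have hUz : U 0 = U0 := rfl
  have a_0 : a 0 = a0 := rfl
  have a_1 : a 1 = a1 := rfl
  have a_2 : a 2 = a2 := rfl
  have u_1 : U 1 = U1 := rfl
  have u_2 : U 2 = U2 := rfl
  have a_k : ∀ k, 3 ≤ k → a k = nx (U k) := by
    intro k hk
    simp only [a, st]
    rw [if_neg (by omega), if_neg (by omega), if_neg (by omega)]
  have haA : ∀ k, 1 ≤ k → a k ∈ A := by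
    intro k hk
    rcases (by omega : k = 1 ∨ k = 2 ∨ 3 ≤ k) with rfl | rfl | h
    · exact ha1A
    · exact ha2A
    · rw [a_k k h]; exact hnxA _
  have hdis : ∀ k, 1 ≤ k → Disjoint A (U k) := by
    intro k hk
    induction k, hk using Nat.le_induction with
    | base => exact hAU1
    | succ k hk ih =>
      rw [hUs]
      exact Finset.disjoint_of_subset_right (Finset.filter_subset _ _) ih
  have hgood : ∀ k, good (a k) (U k) := by
    intro k
    rcases (by omega : k = 0 ∨ k = 1 ∨ k = 2 ∨ 3 ≤ k) with rfl | rfl | rfl | h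
    · exact fun _ => hdeg0
    · exact hg1
    · exact hg2
    · rw [a_k k h]; exact hnxg _ (hdis k (by omega))
  have hbound : ∀ k, ((U k).card : ℝ) ≤ (51 / 100 : ℝ) ^ k * n + 17 * K := by
    intro k
    induction k with
    | zero =>
      rw [hUz, hU0c]
      have : ((n - 2 * K : ℕ) : ℝ) ≤ n := by exact_mod_cast Nat.sub_le _ _
      have h2 : (0 : ℝ) ≤ K := Nat.cast_nonneg _
      simp only [pow_zero]; linarith
    | succ k ih =>
      have hc : ((U k).filter (fun v => G.Adj (a k) v)).card + (U (k + 1)).card = (U k).card :=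
        Finset.card_filter_add_card_filter_not _
      have hp : (0 : ℝ) ≤ (51 / 100 : ℝ) ^ (k + 1) * n := by positivity
      have hK0 : (0 : ℝ) ≤ K := Nat.cast_nonneg _
      by_cases hS : 17 * K ≤ (U k).card
      · have hg := hgood k hS
        have : 100 * (U (k + 1)).card ≤ 51 * (U k).card := by omega
        have h' : (100 : ℝ) * (U (k + 1)).card ≤ 51 * (U k).card := by exact_mod_cast this
        rw [pow_succ]
        linarith
      · have : (U (k + 1)).card ≤ 17 * K := by omega
        have h' : ((U (k + 1)).card : ℝ) ≤ 17 * K := by exact_mod_cast this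
        linarith
  have hUeq : ∀ k, Finset.univ.filter (fun v => v ∉ X0 ∧ ∀ i < k, ¬ G.Adj (a i) v) = U k := by
    intro k
    induction k with
    | zero => ext v; simp [hUz, hU0]
    | succ k ih =>
      rw [hUs, ← ih]
      ext v
      simp only [Finset.mem_filter, Finset.mem_univ, true_and, Nat.lt_succ_iff_lt_or_eq]
      constructor
      · rintro ⟨h1, h2⟩
        exact ⟨⟨h1, fun i hi => h2 i (Or.inl hi)⟩, h2 k (Or.inr rfl)⟩
      · rintro ⟨⟨h1, h2⟩, h3⟩
        refine ⟨h1, ?_⟩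
        rintro i (hi | rfl)
        · exact h2 i hi
        · exact h3
  refine ⟨X0, a, hX0, ha0, ?_, ha12, ?_⟩
  · intro k hk
    have := haA k hk
    rw [hA, Finset.mem_filter, hU0, Finset.mem_sdiff] at this
    exact ⟨this.1.2, this.2⟩
  · intro k
    rw [hUeq]
    exact hbound k

open Classical in
lemma sat_bound {V : Type*} [Fintype V] (K : ℕ) (hK : 1 ≤ K) (G : SimpleGraph V)
    (hG : Disc K G) (hn : 1000 * K ≤ Fintype.card V) (k : ℕ) (hk : Fintype.card V ≤ 2 ^ k)
    (hk2 : 2 ≤ k) :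
    (satNum G (cycGraph 4) : ℝ) ≤ (1904 / 1000) * Fintype.card V
      + (2 * k + 1) * (19 * K) + (1 + 19 * K) ^ 2 := by
  obtain ⟨X0, a, hX0, ha0, hak, ha12, hU⟩ := exists_core K hK G hG hn
  set n := Fintype.card V with hnd
  set m := 2 * k with hm
  have hex : ∀ v : V, ∃ i, m ≤ i ∨ (v ∉ X0 ∧ G.Adj (a i) v) := fun v => ⟨m, Or.inl le_rfl⟩
  let cl : V → ℕ := fun v => Nat.find (hex v)
  have hcl : ∀ v, cl v ≤ m := fun v => Nat.find_min' (hex v) (Or.inl le_rfl)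
  have hcla : ∀ v, cl v < m → v ∉ X0 ∧ G.Adj (a (cl v)) v := by
    intro v hv
    rcases Nat.find_spec (hex v) with h | h
    · exact absurd hv (not_lt.2 h)
    · exact h
  have hclX : ∀ v ∈ X0, cl v = m := by
    intro v hv
    by_contra hne
    exact (hcla v (lt_of_le_of_ne (hcl v) hne)).1 hv
  have h0 : cl (a 0) = m := hclX _ ha0
  have h1 : ∀ j, 1 ≤ j → cl (a j) = 0 := fun j hj =>
    (Nat.find_eq_zero (hex (a j))).2 (Or.inr (hak j hj))
  have hHG : startGraph m a cl ≤ G := by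
    intro v w h
    rw [startGraph, SimpleGraph.fromRel_adj] at h
    rcases h with ⟨-, (⟨h, rfl⟩ | ⟨rfl, rfl⟩) | (⟨h, rfl⟩ | ⟨rfl, rfl⟩)⟩
    · exact (hcla v h).2.symm
    · exact ha12
    · exact (hcla w h).2
    · exact ha12.symm
  obtain ⟨H, hle, hC4, hsat⟩ := exists_saturated G _ hHG
    (startGraph_noC4 m (by omega) a cl h0 h1)
  have hcount := edge_count H hC4 m (by omega) a cl hcl h0 h1 ha12.ne hle
    (fun i => (Finset.univ.filter (fun v => i ≤ cl v)).card) (fun _ => rfl)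
  have hs : satNum G (cycGraph 4) ≤ H.edgeSet.ncard := Nat.sInf_le ⟨H, hsat, rfl⟩
  set N : ℕ → ℕ := fun i => (Finset.univ.filter (fun v => i ≤ cl v)).card with hN
  have hNb : ∀ i, (N i : ℝ) ≤ (51 / 100 : ℝ) ^ i * n + 19 * K := by
    intro i
    have hsub : Finset.univ.filter (fun v => i ≤ cl v) ⊆
        Finset.univ.filter (fun v => v ∉ X0 ∧ ∀ j < i, ¬ G.Adj (a j) v) ∪ X0 := by
      intro v hv
      simp only [Finset.mem_filter, Finset.mem_univ, true_and, Finset.mem_union] at hv ⊢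
      by_cases hx : v ∈ X0
      · right; exact hx
      · left
        refine ⟨hx, fun j hj hadj => ?_⟩
        have : cl v ≤ j := Nat.find_min' (hex v) (Or.inr ⟨hx, hadj⟩)
        omega
    have h := (Finset.card_le_card hsub).trans (Finset.card_union_le _ _)
    rw [hX0] at h
    have h' : (N i : ℝ) ≤ ((Finset.univ.filter
      (fun v => v ∉ X0 ∧ ∀ j < i, ¬ G.Adj (a j) v)).card : ℝ) + 2 * K := by exact_mod_cast h
    have := hU i
    linarith
  have hn0 : (0 : ℝ) ≤ n := Nat.cast_nonneg _
  have hK0 : (0 : ℝ) ≤ K := Nat.cast_nonneg _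
  have hNm : (N m : ℝ) ≤ 1 + 19 * K := by
    have h := hNb m
    have e : (51 / 100 : ℝ) ^ m * n ≤ 1 := by
      have hk' : (n : ℝ) ≤ 2 ^ k := by exact_mod_cast hk
      calc (51 / 100 : ℝ) ^ m * n ≤ (51 / 100 : ℝ) ^ m * 2 ^ k := by gcongr
        _ = (((51 / 100) ^ 2) * 2) ^ k := by rw [hm, pow_mul, mul_pow]
        _ ≤ 1 := pow_le_one₀ (by norm_num) (by norm_num)
    linarith
  have hsum : ∑ i ∈ Finset.Icc 3 m, (N i : ℝ) ≤
      (51 / 100 : ℝ) ^ 3 / (1 - 51 / 100) * n + 2 * k * (19 * K) := by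
    have hgeo : ∑ i ∈ Finset.Icc 3 m, (51 / 100 : ℝ) ^ i ≤ (51 / 100 : ℝ) ^ 3 / (1 - 51 / 100) := by
      rw [show Finset.Icc 3 m = Finset.Ico 3 (m + 1) from rfl]
      exact geom_sum_Ico_le_of_lt_one (by norm_num) (by norm_num)
    calc ∑ i ∈ Finset.Icc 3 m, (N i : ℝ)
        ≤ ∑ i ∈ Finset.Icc 3 m, ((51 / 100 : ℝ) ^ i * n + 19 * K) :=
          Finset.sum_le_sum fun i _ => hNb i
      _ = (∑ i ∈ Finset.Icc 3 m, (51 / 100 : ℝ) ^ i) * n + ((m + 1 - 3 : ℕ) : ℝ) * (19 * K) := by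
          rw [Finset.sum_add_distrib, Finset.sum_mul, Finset.sum_const, Nat.card_Icc, nsmul_eq_mul]
      _ ≤ _ := by
          have : ((m + 1 - 3 : ℕ) : ℝ) ≤ 2 * k := by
            have : m + 1 - 3 ≤ 2 * k := by omega
            exact_mod_cast this
          gcongr
  have h3 := hNb 3
  have hc' : 2 * (H.edgeSet.ncard : ℝ) ≤
      2 * (n + N 3 + ∑ i ∈ Finset.Icc 3 m, (N i : ℝ)) + n + (N m : ℝ) ^ 2 := by
    exact_mod_cast hcount
  have hs' : (satNum G (cycGraph 4) : ℝ) ≤ H.edgeSet.ncard := by exact_mod_cast hs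
  have hsq : (N m : ℝ) ^ 2 ≤ (1 + 19 * K) ^ 2 := by gcongr
  have hsq0 : (0 : ℝ) ≤ (1 + 19 * K) ^ 2 := by positivity
  norm_num at hsum h3
  linarith

instance erMeasure_prob (n : ℕ) (p : ℝ) : IsProbabilityMeasure (erMeasure n p) := by
  unfold erMeasure
  infer_instance

lemma erMeasure_singleton (n : ℕ) (ω : EdgeType n → Bool) :
    erMeasure n (1 / 2) {ω} = (2⁻¹ : ENNReal) ^ Fintype.card (EdgeType n) := by
  unfold erMeasure
  rw [Measure.pi_singleton]
  have hp : min (Real.toNNReal (1 / 2)) 1 = (2⁻¹ : NNReal) := by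
    rw [min_eq_left]
    · ext; simp
    · rw [Real.toNNReal_le_one]; norm_num
  have : ∀ e : EdgeType n, (PMF.bernoulli (min (Real.toNNReal (1 / 2)) 1)
      (min_le_right _ _)).toMeasure {ω e} = (2⁻¹ : ENNReal) := by
    intro e
    rw [PMF.toMeasure_apply_singleton _ _ (measurableSet_singleton _), PMF.bernoulli_apply]
    cases ω e
    · simp only [cond_false, hp]
      have : (1 - 2⁻¹ : NNReal) = 2⁻¹ := by
        rw [tsub_eq_iff_eq_add_of_le (by rw [← NNReal.coe_le_coe]; norm_num)]
        ext; norm_num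
      rw [this, ENNReal.coe_inv (by norm_num)]; rfl
    · simp only [cond_true, hp]
      rw [ENNReal.coe_inv (by norm_num)]; rfl
  rw [Finset.prod_congr rfl fun e _ => this e, Finset.prod_const, Finset.card_univ]

lemma erMeasure_finset (n : ℕ) (S : Finset (EdgeType n → Bool)) :
    erMeasure n (1 / 2) (S : Set (EdgeType n → Bool)) =
      ENNReal.ofReal ((S.card : ℝ) / 2 ^ Fintype.card (EdgeType n)) := by
  rw [← MeasureTheory.sum_measure_singleton]
  simp only [erMeasure_singleton, Finset.sum_const, nsmul_eq_mul]
  rw [div_eq_mul_inv, ENNReal.ofReal_mul (by positivity), ENNReal.ofReal_natCast,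
    ENNReal.ofReal_inv_of_pos (by positivity), ENNReal.ofReal_pow (by norm_num), ENNReal.inv_pow]
  simp

noncomputable def zz : ℝ := 9996 / 10000

noncomputable def qq : ℝ := (1 + zz ^ 100) / 2 / zz ^ 49

lemma qq_pos : 0 < qq := by unfold qq zz; positivity

lemma qq_lt_one : qq < 1 := by
  unfold qq
  rw [div_lt_one (by unfold zz; positivity)]
  unfold zz
  norm_num

lemma tail_count {E : Type*} [Fintype E] [DecidableEq E] (F : Finset E) :
    ((Finset.univ.filter (fun ω : E → Bool =>
      100 * (F.filter (fun e => ω e = true)).card ≤ 49 * F.card)).card : ℝ) ≤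
      qq ^ F.card * 2 ^ Fintype.card E := by
  have hz0 : 0 < zz := by unfold zz; positivity
  have hz1 : zz ≤ 1 := by unfold zz; norm_num
  have hgen : ∑ ω : E → Bool, zz ^ (100 * (F.filter (fun e => ω e = true)).card) =
      (1 + zz ^ 100) ^ F.card * 2 ^ (Fintype.card E - F.card) := by
    have h1 : ∀ ω : E → Bool, zz ^ (100 * (F.filter (fun e => ω e = true)).card) =
        ∏ e, (if e ∈ F then (if ω e = true then zz ^ 100 else 1) else 1) := by
      intro ω
      rw [pow_mul, Finset.prod_ite_mem, Finset.univ_inter, ← Finset.prod_filter, Finset.prod_const]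
    simp_rw [h1]
    have h2 := (Finset.prod_univ_sum (R := ℝ) (fun _ : E => (Finset.univ : Finset Bool))
      (fun e b => if e ∈ F then (if b = true then zz ^ 100 else 1) else 1))
    rw [Fintype.piFinset_univ] at h2
    rw [← h2]
    have h3 : ∀ e : E, ∑ b : Bool, (if e ∈ F then (if b = true then zz ^ 100 else 1) else 1) =
        if e ∈ F then 1 + zz ^ 100 else (2 : ℝ) := by
      intro e
      rw [Fintype.sum_bool]
      by_cases he : e ∈ F
      · simp [he, add_comm]
      · simp only [he, if_false]; norm_num
    rw [Finset.prod_congr rfl fun e _ => h3 e, Finset.prod_ite, Finset.prod_const,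
      Finset.prod_const, Finset.filter_mem_eq_inter, Finset.univ_inter]
    congr 2
    have := Finset.card_filter_add_card_filter_not (s := (Finset.univ : Finset E)) (fun e => e ∈ F)
    rw [Finset.filter_mem_eq_inter, Finset.univ_inter, Finset.card_univ] at this
    omega
  set S := Finset.univ.filter (fun ω : E → Bool =>
      100 * (F.filter (fun e => ω e = true)).card ≤ 49 * F.card) with hS
  have hle : (S.card : ℝ) * zz ^ (49 * F.card) ≤
      (1 + zz ^ 100) ^ F.card * 2 ^ (Fintype.card E - F.card) := by
    rw [← hgen, ← nsmul_eq_mul, ← Finset.sum_const]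
    refine (Finset.sum_le_sum (g := fun ω : E → Bool =>
      zz ^ (100 * (F.filter (fun e => ω e = true)).card)) fun ω hω => ?_).trans
      (Finset.sum_le_sum_of_subset_of_nonneg (Finset.subset_univ _)
        fun ω _ _ => by positivity)
    exact pow_le_pow_of_le_one hz0.le hz1 (Finset.mem_filter.1 hω).2
  have hF : F.card ≤ Fintype.card E := Finset.card_le_univ F
  have hq : qq ^ F.card * 2 ^ Fintype.card E * zz ^ (49 * F.card) =
      (1 + zz ^ 100) ^ F.card * 2 ^ (Fintype.card E - F.card) := by
    obtain ⟨t, ht⟩ := Nat.exists_eq_add_of_le hF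
    rw [ht, Nat.add_sub_cancel_left, pow_add, qq, div_pow, div_pow, pow_mul]
    field_simp
  rw [← hq] at hle
  exact le_of_mul_le_mul_right hle (by positivity)

lemma graphOf_adj {n : ℕ} (ω : EdgeType n → Bool) (v w : Fin n) :
    (graphOf ω).Adj v w ↔ ∃ h : ¬ (s(v, w)).IsDiag, ω ⟨s(v, w), h⟩ = true := by
  rw [graphOf, SimpleGraph.fromEdgeSet_adj]
  constructor
  · rintro ⟨h, -⟩; exact h
  · rintro ⟨h, h'⟩
    exact ⟨⟨h, h'⟩, by simpa using h⟩

open Classical in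
/-- The potential edges between `X` and `U`. -/
noncomputable def between {n : ℕ} (X U : Finset (Fin n)) : Finset (EdgeType n) :=
  Finset.univ.filter (fun e => ∃ x ∈ X, ∃ u ∈ U, e.1 = s(x, u))

open Classical in
lemma between_card {n : ℕ} (X U : Finset (Fin n)) (hd : Disjoint X U) (Q : EdgeType n → Prop) :
    ((between X U).filter Q).card =
      ∑ x ∈ X, (U.filter (fun u => ∃ h : ¬ (s(x, u)).IsDiag, Q ⟨s(x, u), h⟩)).card := by
  have hsum : ∑ x ∈ X, (U.filter (fun u => ∃ h : ¬ (s(x, u)).IsDiag, Q ⟨s(x, u), h⟩)).card =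
      ((X ×ˢ U).filter (fun p => ∃ h : ¬ (s(p.1, p.2)).IsDiag, Q ⟨s(p.1, p.2), h⟩)).card := by
    simp only [Finset.card_filter, Finset.sum_product]
  rw [hsum]
  symm
  refine Finset.card_bij (fun p hp => ⟨s(p.1, p.2), (Finset.mem_filter.1 hp).2.choose⟩) ?_ ?_ ?_
  · rintro ⟨x, u⟩ hp
    have hp' := Finset.mem_filter.1 hp
    rw [Finset.mem_product] at hp'
    rw [Finset.mem_filter, between, Finset.mem_filter]
    exact ⟨⟨Finset.mem_univ _, x, hp'.1.1, u, hp'.1.2, rfl⟩, hp'.2.choose_spec⟩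
  · rintro ⟨x, u⟩ hp ⟨x', u'⟩ hp' h
    have h1 := (Finset.mem_product.1 (Finset.mem_filter.1 hp).1)
    have h2 := (Finset.mem_product.1 (Finset.mem_filter.1 hp').1)
    have h := congrArg Subtype.val h
    simp only [Sym2.eq_iff] at h
    rcases h with ⟨rfl, rfl⟩ | ⟨rfl, rfl⟩
    · rfl
    · exact absurd h2.2 (Finset.disjoint_left.1 hd h1.1)
  · rintro ⟨e, he⟩ h
    rw [Finset.mem_filter, between, Finset.mem_filter] at h
    obtain ⟨⟨-, x, hx, u, hu, hxu⟩, hQ⟩ := h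
    simp only at hxu
    subst hxu
    exact ⟨(x, u), Finset.mem_filter.2 ⟨Finset.mem_product.2 ⟨hx, hu⟩, he, hQ⟩, rfl⟩

open Classical in
lemma between_card' {n : ℕ} (X U : Finset (Fin n)) (hd : Disjoint X U) :
    (between X U).card = X.card * U.card := by
  have := between_card X U hd (fun _ => True)
  have h2 : (between X U).card = ((between X U).filter (fun _ => True)).card := by simp
  have h3 : (between X U).card = ∑ x ∈ X, (U.filter
      (fun u => ∃ _ : ¬ (s(x, u)).IsDiag, True)).card := by
    rw [h2]; convert this
  rw [h3, ← smul_eq_mul, ← Finset.sum_const]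
  refine Finset.sum_congr rfl fun x hx => ?_
  congr 1
  refine Finset.filter_eq_self.2 fun u hu => ⟨?_, trivial⟩
  simp only [Sym2.isDiag_iff_proj_eq]
  rintro rfl
  exact Finset.disjoint_left.1 hd hx hu

open Classical in
lemma bad_count (n K : ℕ) (hK : qq ^ K ≤ 1 / 8) :
    ((Finset.univ.filter (fun ω : EdgeType n → Bool => ¬ Disc K (graphOf ω))).card : ℝ) ≤
      (1 / 2) ^ n * 2 ^ Fintype.card (EdgeType n) := by
  set P : Finset (Finset (Fin n) × Finset (Fin n)) :=
    Finset.univ.filter (fun p => Disjoint p.1 p.2 ∧ K * n ≤ p.1.card * p.2.card) with hP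
  have hsub : Finset.univ.filter (fun ω : EdgeType n → Bool => ¬ Disc K (graphOf ω)) ⊆
      P.biUnion (fun p => Finset.univ.filter (fun ω : EdgeType n → Bool =>
        100 * ((between p.1 p.2).filter (fun e => ω e = true)).card ≤
          49 * (between p.1 p.2).card)) := by
    intro ω hω
    have hω' := (Finset.mem_filter.1 hω).2
    unfold Disc at hω'
    push Not at hω'
    obtain ⟨X, U, hd, hc, hx⟩ := hω'
    rw [Fintype.card_fin] at hc
    rw [Finset.mem_biUnion]
    refine ⟨(X, U), Finset.mem_filter.2 ⟨Finset.mem_univ _, hd, hc⟩, ?_⟩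
    rw [Finset.mem_filter]
    refine ⟨Finset.mem_univ _, ?_⟩
    simp only
    have hb := between_card X U hd (fun e => ω e = true)
    have hb' : ((between X U).filter (fun e => ω e = true)).card =
        ∑ x ∈ X, (U.filter (fun u => (graphOf ω).Adj x u)).card := by
      simp only [graphOf_adj]
      convert hb
    rw [between_card' X U hd, hb', Finset.mul_sum]
    calc _ ≤ ∑ x ∈ X, 49 * U.card := by
          refine Finset.sum_le_sum fun x hxX => ?_
          exact (hx x hxX).le
      _ = _ := by rw [Finset.sum_const, smul_eq_mul]; ring
  have hPc : (P.card : ℝ) ≤ 4 ^ n := by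
    have : P.card ≤ 4 ^ n := by
      refine (Finset.card_le_univ P).trans ?_
      rw [Fintype.card_prod, Fintype.card_finset, Fintype.card_fin, ← mul_pow]
      norm_num
    exact_mod_cast this
  calc _ ≤ ((P.biUnion (fun p => Finset.univ.filter (fun ω : EdgeType n → Bool =>
        100 * ((between p.1 p.2).filter (fun e => ω e = true)).card ≤
          49 * (between p.1 p.2).card))).card : ℝ) := by
        exact_mod_cast Finset.card_le_card hsub
    _ ≤ ∑ p ∈ P, ((Finset.univ.filter (fun ω : EdgeType n → Bool =>
        100 * ((between p.1 p.2).filter (fun e => ω e = true)).card ≤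
          49 * (between p.1 p.2).card)).card : ℝ) := by
        exact_mod_cast Finset.card_biUnion_le
    _ ≤ ∑ p ∈ P, (1 / 8 : ℝ) ^ n * 2 ^ Fintype.card (EdgeType n) := by
        refine Finset.sum_le_sum fun p hp => (tail_count _).trans ?_
        have hp' := (Finset.mem_filter.1 hp).2
        rw [between_card' _ _ hp'.1]
        gcongr
        calc qq ^ (p.1.card * p.2.card) ≤ qq ^ (K * n) :=
              pow_le_pow_of_le_one qq_pos.le qq_lt_one.le hp'.2
          _ = (qq ^ K) ^ n := pow_mul _ _ _
          _ ≤ _ := by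
            have := qq_pos
            gcongr
    _ = P.card * ((1 / 8 : ℝ) ^ n * 2 ^ Fintype.card (EdgeType n)) := by
        rw [Finset.sum_const, nsmul_eq_mul]
    _ ≤ 4 ^ n * ((1 / 8 : ℝ) ^ n * 2 ^ Fintype.card (EdgeType n)) := by gcongr
    _ = _ := by
        rw [← mul_assoc, ← mul_pow]; norm_num

/-- Whp `sat(G(n,1/2), C_4) ≤ (27/14)·n·(1+o(1))`. -/
theorem c4_saturation_upper_half (ε : ℝ) (hε : 0 < ε) :
    Tendsto (fun n : ℕ =>
      erMeasure n (1 / 2) {ω |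
        (satNum (graphOf ω) (cycGraph 4) : ℝ) ≤ (27 / 14) * n * (1 + ε)})
      atTop (nhds 1) := by
  classical
  obtain ⟨K, hK1, hK⟩ : ∃ K : ℕ, 1 ≤ K ∧ qq ^ K ≤ 1 / 8 := by
    have h := (tendsto_pow_atTop_nhds_zero_of_lt_one qq_pos.le qq_lt_one).eventually
      (ge_mem_nhds (show (0 : ℝ) < 1 / 8 by norm_num))
    obtain ⟨K, h1, h2⟩ := (h.and (eventually_ge_atTop 1)).exists
    exact ⟨K, h2, h1⟩
  have hnum : ∀ᶠ n : ℕ in atTop, 1000 * K ≤ n ∧ 2 ≤ Nat.clog 2 n ∧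
      (2 * (Nat.clog 2 n : ℝ) + 1) * (19 * K) + (1 + 19 * K) ^ 2 ≤ (1 / 100) * n := by
    have hlog : Tendsto (fun n : ℕ => (Nat.clog 2 n : ℝ) / n) atTop (nhds 0) := by
      have h1 : Tendsto (fun n : ℕ => (Real.log n / Real.log 2 + 1) / n) atTop (nhds 0) := by
        have ha : Tendsto (fun n : ℕ => Real.log n / (n : ℝ)) atTop (nhds 0) := by
          have := (Real.isLittleO_log_id_atTop.tendsto_div_nhds_zero).comp
            (tendsto_natCast_atTop_atTop (R := ℝ))
          exact this
        have hb : Tendsto (fun n : ℕ => 1 / (n : ℝ)) atTop (nhds 0) :=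
          tendsto_one_div_atTop_nhds_zero_nat
        have := (ha.div_const (Real.log 2)).add hb
        simp only [zero_div, add_zero] at this
        refine this.congr fun n => ?_
        ring
      refine tendsto_of_tendsto_of_tendsto_of_le_of_le' tendsto_const_nhds h1
        (Eventually.of_forall fun n => by positivity) ?_
      filter_upwards [eventually_ge_atTop 2] with n hn
      have hn0 : (0 : ℝ) < n := by positivity
      gcongr
      have hc := Nat.pow_pred_clog_lt_self (b := 2) (by norm_num) (show 1 < n by omega)
      have hpos : 0 < Nat.clog 2 n := Nat.clog_pos (by norm_num) hn
      have hc' : (2 : ℝ) ^ ((Nat.clog 2 n).pred) ≤ n := by exact_mod_cast hc.le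
      have hl := Real.log_le_log (by positivity) hc'
      rw [Real.log_pow] at hl
      have h2 : 0 < Real.log 2 := Real.log_pos (by norm_num)
      have : ((Nat.clog 2 n).pred : ℝ) ≤ Real.log n / Real.log 2 := by
        rw [le_div_iff₀ h2]; exact hl
      have he : (Nat.clog 2 n : ℝ) = ((Nat.clog 2 n).pred : ℝ) + 1 := by
        exact_mod_cast (Nat.succ_pred_eq_of_pos hpos).symm
      rw [he]; linarith
    have htot : Tendsto (fun n : ℕ => ((2 * (Nat.clog 2 n : ℝ) + 1) * (19 * K)
        + (1 + 19 * K) ^ 2) / n) atTop (nhds 0) := by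
      have hb : Tendsto (fun n : ℕ => 1 / (n : ℝ)) atTop (nhds 0) :=
        tendsto_one_div_atTop_nhds_zero_nat
      have := (hlog.const_mul (2 * (19 * (K : ℝ)))).add
        (hb.const_mul (19 * (K : ℝ) + (1 + 19 * K) ^ 2))
      simp only [mul_zero, add_zero] at this
      refine this.congr fun n => ?_
      ring
    filter_upwards [htot.eventually (ge_mem_nhds (show (0 : ℝ) < 1 / 100 by norm_num)),
      eventually_ge_atTop (1000 * K), eventually_ge_atTop 3] with n h1 h2 h3
    refine ⟨h2, ?_, ?_⟩
    · by_contra hlt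
      have := Nat.le_pow_clog (b := 2) (by norm_num) n
      have : 2 ^ Nat.clog 2 n ≤ 2 ^ 1 := Nat.pow_le_pow_right (by norm_num) (by omega)
      omega
    · rwa [div_le_iff₀ (by positivity)] at h1
  have hlow : ∀ᶠ n : ℕ in atTop, 1 - ENNReal.ofReal ((1 / 2) ^ n) ≤
      erMeasure n (1 / 2) {ω |
        (satNum (graphOf ω) (cycGraph 4) : ℝ) ≤ (27 / 14) * n * (1 + ε)} := by
    filter_upwards [hnum] with n hn
    obtain ⟨hn1, hn2, hn3⟩ := hn
    set S := {ω : EdgeType n → Bool |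
        (satNum (graphOf ω) (cycGraph 4) : ℝ) ≤ (27 / 14) * n * (1 + ε)} with hS
    set B := Finset.univ.filter (fun ω : EdgeType n → Bool => ¬ Disc K (graphOf ω)) with hB
    have hcov : (Set.univ : Set (EdgeType n → Bool)) ⊆ S ∪ (B : Set _) := by
      intro ω _
      by_cases hd : Disc K (graphOf ω)
      · left
        have h := sat_bound K hK1 (graphOf ω) hd (by rwa [Fintype.card_fin]) (Nat.clog 2 n)
          (by rw [Fintype.card_fin]; exact Nat.le_pow_clog (by norm_num) n) hn2
        rw [Fintype.card_fin] at h
        change (satNum (graphOf ω) (cycGraph 4) : ℝ) ≤ (27 / 14) * n * (1 + ε)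
        have hn0 : (0 : ℝ) ≤ n := Nat.cast_nonneg _
        have : (0 : ℝ) ≤ n * ε := by positivity
        nlinarith
      · right
        exact Finset.mem_coe.2 (Finset.mem_filter.2 ⟨Finset.mem_univ _, hd⟩)
    have h1 : (1 : ENNReal) ≤ erMeasure n (1 / 2) S + erMeasure n (1 / 2) (B : Set _) := by
      rw [← measure_univ (μ := erMeasure n (1 / 2))]
      exact (measure_mono hcov).trans (measure_union_le _ _)
    have h2 : erMeasure n (1 / 2) (B : Set _) ≤ ENNReal.ofReal ((1 / 2) ^ n) := by
      rw [erMeasure_finset]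
      apply ENNReal.ofReal_le_ofReal
      rw [div_le_iff₀ (by positivity)]
      exact bad_count n K hK
    rw [tsub_le_iff_right]
    exact h1.trans (by gcongr)
  have hlim : Tendsto (fun n : ℕ => 1 - ENNReal.ofReal ((1 / 2) ^ n)) atTop (nhds 1) := by
    have h0 : Tendsto (fun n : ℕ => ENNReal.ofReal ((1 / 2 : ℝ) ^ n)) atTop (nhds 0) := by
      have := ENNReal.tendsto_ofReal
        (tendsto_pow_atTop_nhds_zero_of_lt_one (show (0 : ℝ) ≤ 1 / 2 by norm_num) (by norm_num))
      simpa using this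
    have := ENNReal.Tendsto.sub (tendsto_const_nhds (x := (1 : ENNReal)) (f := atTop)) h0
      (Or.inl ENNReal.one_ne_top)
    simpa using this
  exact tendsto_of_tendsto_of_tendsto_of_le_of_le' hlim tendsto_const_nhds hlow
    (Eventually.of_forall fun n => prob_le_one)
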